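/- arXiv:2605.18598 — 3 statements merged into one kernel-verified Lean document; each statement's English description precedes it below -/
import Mathlib

section
/- Ambient Equivalence of Pointwise Dimension (Lemma). Let (F, ρ) be a (semi-)metric space, H ⊆ F a measurable subset, and p : F → H a measurable nearest-point selector, i.e. ρ(f, p(f)) = inf_{h∈H} ρ(f,h) for every f ∈ F (the infimum is attained by p(f)). For a probability measure π on F let π_H := p_*π denote the pushforward measure on H. Then: (i) for every f ∈ H and every ε > 0, π_H(B_ρ(f,2ε)) ≥ π(B_ρ(f,ε)), equivalently log(1/π_H(B_ρ(f,2ε))) ≤ log(1/π(B_ρ(f,ε))); (ii) for any fixed integer n ≥ 1, defining the majorizing-measure integral I(π,f,ρ) := inf_{α ≥ 0} { α + (1/√n) ∫_α^∞ √( log(1/π(B_ρ(f,ε))) ) dε } (valued in [0,∞]), one has (1/2)·inf_{μ∈Δ(H)} sup_{f∈H} I(μ,f,ρ) ≤ inf_{π∈Δ(F)} sup_{f∈H} I(π,f,ρ) ≤ inf_{μ∈Δ(H)} sup_{f∈H} I(μ,f,ρ), where Δ(·) denotes the probability measures on the indicated set. -/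
open MeasureTheory
open scoped ENNReal NNReal

noncomputable section

/-- The pointwise dimension `log(1/p)` of a (probability) mass `p`, valued in `[0,∞]`,
with the convention `log(1/0) = ∞`. -/
def negLog (p : ℝ≥0∞) : ℝ≥0∞ :=
  if p = 0 then ⊤ else ENNReal.ofReal (Real.log (1 / p.toReal))

/-- Ball of radius `ε` around `f` for a (semi-)metric `ρ`. -/
def mball {F : Type*} (ρ : F → F → ℝ) (f : F) (ε : ℝ) : Set F := {f' | ρ f f' ≤ ε}

/-- The majorizing-measure integral
`I(π,f,ρ) = inf_{α ≥ 0} { α + (1/√n) ∫_α^∞ √(log(1/π(B_ρ(f,ε)))) dε }`, valued in `[0,∞]`. -/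
def mmIntegral {F : Type*} [MeasurableSpace F] (n : ℕ) (ρ : F → F → ℝ)
    (π : Measure F) (f : F) : ℝ≥0∞ :=
  ⨅ (α : ℝ) (_ : 0 ≤ α),
    (ENNReal.ofReal α +
      ENNReal.ofReal (1 / Real.sqrt n) *
        ∫⁻ ε in Set.Ioi α, (negLog (π (mball ρ f ε))) ^ (1 / 2 : ℝ))

/-! Moving `g` to `p g` costs at most `ρ g f`, since `f ∈ H` competes with `p g` as a nearest
point. Hence `p` maps the ball of radius `ε` around `f` into the ball of radius `2 * ε`, and the
substitution `ε ↦ 2 * ε` in the integral turns this inclusion into the factor `2`. A selector that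
is nearest only up to a factor `K` gives `1 + K` in place of `2`. -/

theorem negLog_antitone : Antitone negLog := by
  intro a b hab
  rcases eq_or_ne a 0 with rfl | ha
  · simp [negLog]
  -- Mass `⊤` causes no failure: `⊤.toReal = 0` and `Real.log (1 / 0) = 0`, so `negLog ⊤ = 0`.
  rcases eq_or_ne b ⊤ with rfl | hb
  · simp [negLog]
  have hb₀ : b ≠ 0 := (hab.trans_lt' (pos_iff_ne_zero.2 ha)).ne'
  have ha_pos : 0 < a.toReal := ENNReal.toReal_pos ha (ne_top_of_le_ne_top hb hab)
  have hab_real : a.toReal ≤ b.toReal := ENNReal.toReal_mono hb hab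
  have hb_pos : 0 < b.toReal := ha_pos.trans_le hab_real
  simp only [negLog, if_neg ha, if_neg hb₀]
  gcongr

theorem setLIntegral_Ioi_mul_left {c : ℝ} (hc : 0 < c) (g : ℝ → ℝ≥0∞) (α : ℝ) :
    ∫⁻ ε in Set.Ioi (c * α), g ε = ENNReal.ofReal c * ∫⁻ ε in Set.Ioi α, g (c * ε) := by
  have hpre : (c * ·) ⁻¹' Set.Ioi (c * α) = Set.Ioi α := by
    rw [Set.preimage_const_mul_Ioi₀ _ hc, mul_div_cancel_left₀ α hc.ne']
  conv_lhs => rw [← Real.smul_map_volume_mul_left hc.ne', Measure.restrict_smul,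
    lintegral_smul_measure, (measurableEmbedding_mulLeft₀ hc.ne').restrict_map,
    (measurableEmbedding_mulLeft₀ hc.ne').lintegral_map, hpre, abs_of_pos hc, smul_eq_mul]

section

variable {F : Type*} {ρ : F → F → ℝ} {p : F → F} {K : ℝ≥0} {f : F}

theorem mapsTo_mball_mball (hsymm : ∀ f g, ρ f g = ρ g f)
    (htri : ∀ f g h, ρ f h ≤ ρ f g + ρ g h) (hnear : ∀ g, ρ g (p g) ≤ K * ρ g f) (ε : ℝ) :
    Set.MapsTo p (mball ρ f ε) (mball ρ f ((1 + K) * ε)) := by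
  intro g (hg : ρ f g ≤ ε)
  calc
    ρ f (p g) ≤ ρ f g + ρ g (p g) := htri f g (p g)
    _ ≤ ρ f g + K * ρ g f := by gcongr; exact hnear g
    _ = (1 + K) * ρ f g := by rw [hsymm g f]; ring
    _ ≤ (1 + K) * ε := by gcongr

variable [MeasurableSpace F]

theorem mmIntegral_le_mul_of_measure_mball_le {n : ℕ} {π μ : Measure F} {c : ℝ≥0} (hc : 0 < c)
    (hball : ∀ ε : ℝ, 0 < ε → π (mball ρ f ε) ≤ μ (mball ρ f (c * ε))) :
    mmIntegral n ρ μ f ≤ c * mmIntegral n ρ π f := by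
  have hne : (c : ℝ≥0∞) ≠ 0 := by simpa using hc.ne'
  simp only [mmIntegral, ENNReal.mul_iInf_of_ne hne ENNReal.coe_ne_top]
  refine le_iInf₂ fun α hα => iInf₂_le_of_le (c * α) (by positivity) ?_
  rw [setLIntegral_Ioi_mul_left (NNReal.coe_pos.2 hc), mul_add, ENNReal.ofReal_mul c.coe_nonneg,
    ENNReal.ofReal_coe_nnreal, mul_left_comm]
  gcongr _ + _ * (_ * ?_)
  refine setLIntegral_mono' measurableSet_Ioi fun ε hε => ?_
  gcongr
  exact negLog_antitone (hball ε (hα.trans_lt hε))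

theorem measure_mball_le_map_mball (hsymm : ∀ f g, ρ f g = ρ g f)
    (htri : ∀ f g h, ρ f h ≤ ρ f g + ρ g h) (hnear : ∀ g, ρ g (p g) ≤ K * ρ g f)
    {π : Measure F} (hp : AEMeasurable p π) (ε : ℝ) :
    π (mball ρ f ε) ≤ π.map p (mball ρ f ((1 + K) * ε)) :=
  (measure_mono (mapsTo_mball_mball hsymm htri hnear ε)).trans (Measure.le_map_apply hp _)

theorem mmIntegral_map_le (hsymm : ∀ f g, ρ f g = ρ g f)
    (htri : ∀ f g h, ρ f h ≤ ρ f g + ρ g h) (hnear : ∀ g, ρ g (p g) ≤ K * ρ g f)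
    {π : Measure F} (hp : AEMeasurable p π) (n : ℕ) :
    mmIntegral n ρ (π.map p) f ≤ (1 + K) * mmIntegral n ρ π f := by
  have hball (ε : ℝ) : π (mball ρ f ε) ≤ π.map p (mball ρ f (↑(1 + K) * ε)) := by
    simpa using measure_mball_le_map_mball hsymm htri hnear hp ε
  simpa using mmIntegral_le_mul_of_measure_mball_le (n := n) (c := 1 + K) (by positivity)
    fun ε _ => hball ε

theorem ambient_equivalence_of_pointwise_dimension_general {H : Set F}
    (hsymm : ∀ f g, ρ f g = ρ g f) (htri : ∀ f g h, ρ f h ≤ ρ f g + ρ g h)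
    (hH : MeasurableSet H) (hp : Measurable p) (hpH : ∀ f, p f ∈ H)
    (hnear : ∀ f, ∀ h ∈ H, ρ f (p f) ≤ K * ρ f h) (n : ℕ) (_hn : 1 ≤ n) :
    (∀ (π : Measure F), IsProbabilityMeasure π → ∀ f ∈ H, ∀ ε : ℝ, 0 < ε →
        π (mball ρ f ε) ≤ (Measure.map p π) (mball ρ f ((1 + K) * ε)) ∧
        negLog ((Measure.map p π) (mball ρ f ((1 + K) * ε))) ≤ negLog (π (mball ρ f ε))) ∧
    ((1 / (1 + K) : ℝ≥0∞) *
        (⨅ (μ : Measure F) (_ : IsProbabilityMeasure μ) (_ : μ Hᶜ = 0),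
          ⨆ f ∈ H, mmIntegral n ρ μ f) ≤
      ⨅ (π : Measure F) (_ : IsProbabilityMeasure π), ⨆ f ∈ H, mmIntegral n ρ π f) ∧
    (⨅ (π : Measure F) (_ : IsProbabilityMeasure π), ⨆ f ∈ H, mmIntegral n ρ π f ≤
      ⨅ (μ : Measure F) (_ : IsProbabilityMeasure μ) (_ : μ Hᶜ = 0),
        ⨆ f ∈ H, mmIntegral n ρ μ f) := by
  have hball (π : Measure F) (f : F) (hf : f ∈ H) (ε : ℝ) :
      π (mball ρ f ε) ≤ π.map p (mball ρ f ((1 + K) * ε)) :=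
    measure_mball_le_map_mball hsymm htri (fun g => hnear g f hf) hp.aemeasurable ε
  have hsup (π : Measure F) :
      ⨆ f ∈ H, mmIntegral n ρ (π.map p) f ≤ (1 + K) * ⨆ f ∈ H, mmIntegral n ρ π f := by
    simp only [ENNReal.mul_iSup]
    exact iSup₂_mono fun f hf =>
      mmIntegral_map_le hsymm htri (fun g => hnear g f hf) hp.aemeasurable n
  have hmap_compl (π : Measure F) : π.map p Hᶜ = 0 :=
    (mem_ae_map_iff hp.aemeasurable hH).2 (ae_of_all π hpH)
  refine ⟨fun π _ f hf ε _ => ⟨hball π f hf ε, negLog_antitone (hball π f hf ε)⟩,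
    le_iInf₂ fun π _ => ?_, le_iInf fun μ => le_iInf₂ fun hμ _ => iInf₂_le μ hμ⟩
  have hπ : IsProbabilityMeasure (π.map p) := Measure.isProbabilityMeasure_map hp.aemeasurable
  rw [one_div, mul_comm, ← div_eq_mul_inv]
  exact ENNReal.div_le_of_le_mul' <|
    (iInf₂_le_of_le (π.map p) hπ (iInf_le _ (hmap_compl π))).trans (hsup π)

end

/-- **Ambient Equivalence of Pointwise Dimension (Lemma).** -/
theorem ambient_equivalence_of_pointwise_dimension
    (F : Type) [MeasurableSpace F] (ρ : F → F → ℝ)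
    (hsymm : ∀ f g, ρ f g = ρ g f) (hrefl : ∀ f, ρ f f = 0)
    (htri : ∀ f g h, ρ f h ≤ ρ f g + ρ g h)
    (H : Set F) (hH : MeasurableSet H)
    (p : F → F) (hp : Measurable p) (hpH : ∀ f, p f ∈ H)
    (hnear : ∀ f, ∀ h ∈ H, ρ f (p f) ≤ ρ f h)
    (n : ℕ) (hn : 1 ≤ n) :
    (∀ (π : Measure F), IsProbabilityMeasure π → ∀ f ∈ H, ∀ ε : ℝ, 0 < ε →
        π (mball ρ f ε) ≤ (Measure.map p π) (mball ρ f (2 * ε)) ∧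
        negLog ((Measure.map p π) (mball ρ f (2 * ε))) ≤ negLog (π (mball ρ f ε))) ∧
    ((1 / 2 : ℝ≥0∞) *
        (⨅ (μ : Measure F) (_ : IsProbabilityMeasure μ) (_ : μ Hᶜ = 0),
          ⨆ f ∈ H, mmIntegral n ρ μ f) ≤
      ⨅ (π : Measure F) (_ : IsProbabilityMeasure π), ⨆ f ∈ H, mmIntegral n ρ π f) ∧
    (⨅ (π : Measure F) (_ : IsProbabilityMeasure π), ⨆ f ∈ H, mmIntegral n ρ π f ≤
      ⨅ (μ : Measure F) (_ : IsProbabilityMeasure μ) (_ : μ Hᶜ = 0),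
        ⨆ f ∈ H, mmIntegral n ρ μ f) := by
  simpa only [NNReal.coe_one, ENNReal.coe_one, one_add_one_eq_two] using
    ambient_equivalence_of_pointwise_dimension_general (K := 1) hsymm htri hH hp hpH
      (by simpa using hnear) n hn

end
end

section
/- Non-Perturbative Feature Expansion (Lemma). Consider a fully connected network with widths d_0,…,d_L, 1-Lipschitz columnwise activations σ_1,…,σ_L, input matrix X ∈ ℝ^{d_0×n}, and feature matrices F_l(·,X). Fix weights W, a radius ε > 0, and nonnegative reals M_1,…,M_L with the following property: for every l ∈ {1,…,L} and every weight tuple W' with ρ_n(W,W') ≤ ε, the outer map G_l^{W'}(A) := σ_L(W'_L · σ_{L−1}(W'_{L−1} · ⋯ σ_{l+1}(W'_{l+1} · A)⋯)) (interpreted as the identity map when l = L) satisfies ‖G_l^{W'}(σ_l(W'_l F_{l−1}(W,X))) − G_l^{W'}(σ_l(W_l F_{l−1}(W,X)))‖_F ≤ M_l · ‖σ_l(W'_l F_{l−1}(W,X)) − σ_l(W_l F_{l−1}(W,X))‖_F. Then for every W' with ρ_n(W,W') ≤ ε: ‖F_L(W',X) − F_L(W,X)‖_F² ≤ Σ_{l=1}^L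 L · M_l² · ‖(W'_l − W_l) · F_{l−1}(W,X)‖_F². -/
open scoped BigOperators

noncomputable section

/-- Squared Frobenius norm of a real matrix. -/
def frobSq {m k : Type*} [Fintype m] [Fintype k] (M : Matrix m k ℝ) : ℝ :=
  ∑ i, ∑ j, M i j ^ 2

/-- Apply a map `g : ℝ^m → ℝ^m` columnwise to a matrix. -/
def mapCols {m k : Type*} [Fintype m] [Fintype k] (g : (m → ℝ) → m → ℝ)
    (M : Matrix m k ℝ) : Matrix m k ℝ :=
  Matrix.of fun i j => g (fun i' => M i' j) i

/-- Weight tuples of a fully connected network with widths `d 0, d 1, d 2, …`: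
the `l`-th weight matrix maps `ℝ^{d l}` to `ℝ^{d (l+1)}`. -/
def Weights (d : ℕ → ℕ) : Type :=
  (l : ℕ) → Matrix (Fin (d (l + 1))) (Fin (d l)) ℝ

/-- The feature matrices of the network: `F_0 = X`, `F_{l+1} = σ_l(W_l F_l)`. -/
def feat (d : ℕ → ℕ) (nn : ℕ) (σ : (l : ℕ) → ((Fin (d (l + 1)) → ℝ) → Fin (d (l + 1)) → ℝ))
    (W : Weights d) (X : Matrix (Fin (d 0)) (Fin nn) ℝ) :
    (l : ℕ) → Matrix (Fin (d l)) (Fin nn) ℝ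
  | 0 => X
  | l + 1 => mapCols (σ l) (W l * feat d nn σ W X l)

/-- Propagation of an arbitrary matrix `A` (sitting at layer `start`) through the layers
`start, start+1, …` of the network; after `k` steps it gives a matrix at layer `start + k`. -/
def iterNet (d : ℕ → ℕ) (nn : ℕ) (σ : (l : ℕ) → ((Fin (d (l + 1)) → ℝ) → Fin (d (l + 1)) → ℝ))
    (W : Weights d) (start : ℕ) (A : Matrix (Fin (d start)) (Fin nn) ℝ) :
    (k : ℕ) → Matrix (Fin (d (start + k))) (Fin nn) ℝ
  | 0 => A
  | k + 1 => mapCols (σ (start + k)) (W (start + k) * iterNet d nn σ W start A k)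

/-- The empirical network metric `ρ_n(W,W') = ‖F_L(W,X) − F_L(W',X)‖_F / √n`. -/
def rhoN (d : ℕ → ℕ) (L nn : ℕ) (σ : (l : ℕ) → ((Fin (d (l + 1)) → ℝ) → Fin (d (l + 1)) → ℝ))
    (X : Matrix (Fin (d 0)) (Fin nn) ℝ) (W W' : Weights d) : ℝ :=
  Real.sqrt (frobSq (feat d nn σ W X L - feat d nn σ W' X L) / nn)

/-!
Replace the weights `W'` by `W` one layer at a time, starting from the input. The outputs of the
resulting hybrid networks telescope from `F_L(W', X)` to `F_L(W, X)`. Two consecutive hybrids share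
the input `F_j(W, X)` of layer `j` and the layers of `W'` after it, so their outputs differ by the
outer map of `W'` applied to `σ_j(W'_j F_j(W, X))` and to `σ_j(W_j F_j(W, X))`, which is what the
local Lipschitz bound controls. Cauchy–Schwarz on the `L` increments gives the factor `L`.
-/

section Frobenius

variable {m k : Type*} [Fintype m] [Fintype k]

theorem frobSq_nonneg (A : Matrix m k ℝ) : 0 ≤ frobSq A :=
  Finset.sum_nonneg fun _ _ => Finset.sum_nonneg fun _ _ => sq_nonneg _

open scoped Matrix.Norms.Frobenius in
theorem frobSq_eq_norm_sq (A : Matrix m k ℝ) : frobSq A = ‖A‖ ^ 2 := by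
  rw [Matrix.frobenius_norm_def, ← Real.sqrt_eq_rpow, Real.sq_sqrt (by positivity)]
  simp [frobSq]

open scoped Matrix.Norms.Frobenius in
theorem frobSq_sum_le_card_mul_sum {ι : Type*} (s : Finset ι) (A : ι → Matrix m k ℝ) :
    frobSq (∑ i ∈ s, A i) ≤ s.card * ∑ i ∈ s, frobSq (A i) := by
  simp only [frobSq_eq_norm_sq]
  calc ‖∑ i ∈ s, A i‖ ^ 2 ≤ (∑ i ∈ s, ‖A i‖) ^ 2 := by gcongr; exact norm_sum_le s A
    _ ≤ s.card * ∑ i ∈ s, ‖A i‖ ^ 2 := sq_sum_le_card_mul_sum_sq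

theorem frobSq_mapCols_sub_mapCols_le {g : (m → ℝ) → m → ℝ}
    (hg : ∀ u v : m → ℝ, ∑ i, (g u i - g v i) ^ 2 ≤ ∑ i, (u i - v i) ^ 2)
    (A B : Matrix m k ℝ) : frobSq (mapCols g A - mapCols g B) ≤ frobSq (A - B) := by
  unfold frobSq
  rw [Finset.sum_comm, Finset.sum_comm (f := fun i j => (A - B) i j ^ 2)]
  exact Finset.sum_le_sum fun j _ => hg (fun i => A i j) (fun i => B i j)

end Frobenius

section Network

variable {d : ℕ → ℕ} {nn : ℕ}
  {σ : (l : ℕ) → ((Fin (d (l + 1)) → ℝ) → Fin (d (l + 1)) → ℝ)}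
  {X : Matrix (Fin (d 0)) (Fin nn) ℝ}

theorem feat_congr {V W : Weights d} {n : ℕ} (h : ∀ l < n, V l = W l) :
    feat d nn σ V X n = feat d nn σ W X n := by
  induction n with
  | zero => rfl
  | succ n ih =>
    simp only [feat]
    rw [h n n.lt_succ_self, ih fun l hl => h l (hl.trans n.lt_succ_self)]

theorem iterNet_congr {V W : Weights d} {s k : ℕ} (h : ∀ i < k, V (s + i) = W (s + i))
    (A : Matrix (Fin (d s)) (Fin nn) ℝ) :
    iterNet d nn σ V s A k = iterNet d nn σ W s A k := by
  induction k with
  | zero => rfl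
  | succ k ih =>
    simp only [iterNet]
    rw [h k k.lt_succ_self, ih fun i hi => h i (hi.trans k.lt_succ_self)]

theorem feat_add (W : Weights d) (s k : ℕ) :
    feat d nn σ W X (s + k) = iterNet d nn σ W s (feat d nn σ W X s) k := by
  induction k with
  | zero => rfl
  | succ k ih => rw [iterNet, ← ih]; rfl

/-- The weights of the hybrid network of the telescoping argument: layers before `j` are taken
from `W`, layers from `j` on are taken from `W'`. -/
def Weights.splice (W W' : Weights d) (j : ℕ) : Weights d :=
  fun l => if l < j then W l else W' l

namespace Weights

variable (W W' : Weights d)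

theorem splice_of_lt {j l : ℕ} (h : l < j) : W.splice W' j l = W l := if_pos h

theorem splice_of_le {j l : ℕ} (h : j ≤ l) : W.splice W' j l = W' l := if_neg h.not_gt

theorem splice_zero : W.splice W' 0 = W' :=
  funext fun l => W.splice_of_le W' l.zero_le

end Weights

variable (W W' : Weights d)

theorem feat_splice_self (j : ℕ) : feat d nn σ (W.splice W' j) X j = feat d nn σ W X j :=
  feat_congr fun _ => W.splice_of_lt W'

theorem feat_splice_succ (j : ℕ) :
    feat d nn σ (W.splice W' j) X (j + 1) = mapCols (σ j) (W' j * feat d nn σ W X j) := by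
  rw [feat, feat_splice_self, W.splice_of_le W' le_rfl]

theorem feat_splice_add {j s : ℕ} (h : j ≤ s) (k : ℕ) :
    feat d nn σ (W.splice W' j) X (s + k) =
      iterNet d nn σ W' s (feat d nn σ (W.splice W' j) X s) k := by
  rw [feat_add]
  exact iterNet_congr (fun i _ => W.splice_of_le W' (h.trans (s.le_add_right i))) _

-- Stated for `frobSq` because the matrices on the two sides have the propositionally but not
-- definitionally equal row dimensions `d L` and `d (j + 1 + (L - (j + 1)))`.
theorem frobSq_feat_splice_sub_feat_splice_succ {j L : ℕ} (hj : j < L) :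
    frobSq (feat d nn σ (W.splice W' j) X L - feat d nn σ (W.splice W' (j + 1)) X L) =
      frobSq
        (iterNet d nn σ W' (j + 1) (mapCols (σ j) (W' j * feat d nn σ W X j)) (L - (j + 1)) -
          iterNet d nn σ W' (j + 1) (mapCols (σ j) (W j * feat d nn σ W X j)) (L - (j + 1))) := by
  obtain ⟨k, rfl⟩ := Nat.exists_eq_add_of_le (Nat.succ_le_of_lt hj)
  rw [Nat.add_sub_cancel_left, feat_splice_add W W' j.le_succ, feat_splice_succ,
    feat_splice_add W W' le_rfl, feat_splice_self, feat]

theorem feat_sub_feat_eq_sum_splice (L : ℕ) :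
    feat d nn σ W' X L - feat d nn σ W X L =
      ∑ j ∈ Finset.range L,
        (feat d nn σ (W.splice W' j) X L - feat d nn σ (W.splice W' (j + 1)) X L) := by
  rw [Finset.sum_range_sub' fun j => feat d nn σ (W.splice W' j) X L, W.splice_zero,
    feat_splice_self]

theorem nonperturbative_feature_expansion_general {L : ℕ}
    (hσ : ∀ l < L, ∀ u v : Fin (d (l + 1)) → ℝ,
      ∑ i, (σ l u i - σ l v i) ^ 2 ≤ ∑ i, (u i - v i) ^ 2)
    {M : ℕ → ℝ}
    (hloc : ∀ j < L,
      Real.sqrt (frobSq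
          (iterNet d nn σ W' (j + 1) (mapCols (σ j) (W' j * feat d nn σ W X j)) (L - (j + 1)) -
            iterNet d nn σ W' (j + 1) (mapCols (σ j) (W j * feat d nn σ W X j)) (L - (j + 1)))) ≤
        M j * Real.sqrt (frobSq
          (mapCols (σ j) (W' j * feat d nn σ W X j) -
            mapCols (σ j) (W j * feat d nn σ W X j)))) :
    frobSq (feat d nn σ W' X L - feat d nn σ W X L) ≤
      ∑ j ∈ Finset.range L, (L : ℝ) * M j ^ 2 * frobSq ((W' j - W j) * feat d nn σ W X j) := by
  have increment_le : ∀ j ∈ Finset.range L,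
      frobSq (feat d nn σ (W.splice W' j) X L - feat d nn σ (W.splice W' (j + 1)) X L) ≤
        M j ^ 2 * frobSq ((W' j - W j) * feat d nn σ W X j) := by
    intro j hj
    rw [Finset.mem_range] at hj
    rw [frobSq_feat_splice_sub_feat_splice_succ W W' hj, Matrix.sub_mul]
    refine (Real.sqrt_le_iff.mp (hloc j hj)).2.trans ?_
    rw [mul_pow, Real.sq_sqrt (frobSq_nonneg _)]
    gcongr
    exact frobSq_mapCols_sub_mapCols_le (hσ j hj) _ _
  rw [feat_sub_feat_eq_sum_splice W W']
  refine (frobSq_sum_le_card_mul_sum _ _).trans ?_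
  simp only [Finset.card_range, mul_assoc, ← Finset.mul_sum]
  gcongr with j hj
  exact increment_le j hj

end Network

/-- **Non-Perturbative Feature Expansion (Lemma).** -/
theorem nonperturbative_feature_expansion
    (d : ℕ → ℕ) (L nn : ℕ) (hL : 1 ≤ L) (hn : 1 ≤ nn)
    (σ : (l : ℕ) → ((Fin (d (l + 1)) → ℝ) → Fin (d (l + 1)) → ℝ))
    (hσ : ∀ (l : ℕ) (u v : Fin (d (l + 1)) → ℝ),
      ∑ i, (σ l u i - σ l v i) ^ 2 ≤ ∑ i, (u i - v i) ^ 2)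
    (X : Matrix (Fin (d 0)) (Fin nn) ℝ)
    (W : Weights d) (ε : ℝ) (hε : 0 < ε)
    (M : ℕ → ℝ) (hM : ∀ l, 0 ≤ M l)
    (hloc : ∀ W' : Weights d, rhoN d L nn σ X W W' ≤ ε → ∀ j, j < L →
      Real.sqrt (frobSq
          (iterNet d nn σ W' (j + 1) (mapCols (σ j) (W' j * feat d nn σ W X j)) (L - (j + 1)) -
            iterNet d nn σ W' (j + 1) (mapCols (σ j) (W j * feat d nn σ W X j)) (L - (j + 1)))) ≤
        M j * Real.sqrt (frobSq
          (mapCols (σ j) (W' j * feat d nn σ W X j) -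
            mapCols (σ j) (W j * feat d nn σ W X j)))) :
    ∀ W' : Weights d, rhoN d L nn σ X W W' ≤ ε →
      frobSq (feat d nn σ W' X L - feat d nn σ W X L) ≤
        ∑ j ∈ Finset.range L, (L : ℝ) * M j ^ 2 * frobSq ((W' j - W j) * feat d nn σ W X j) := by
  exact fun W' hW' =>
    nonperturbative_feature_expansion_general W W' (fun l _ => hσ l) (hloc W' hW')

end
end

section
/- Non-Perturbative Decomposition of the Projector Difference (Lemma). Fix integers 1 ≤ r < d. Let E₁ := (I_r; 0) ∈ ℝ^{d×r} and E₂ := (0; I_{d−r}) ∈ ℝ^{d×(d−r)} be the block-identity matrices (blocks stacked vertically). For X ∈ ℝ^{(d−r)×r}, set A(X) := (I_r; X) ∈ ℝ^{d×r}, M(X) := (I_r + XᵀX)^{−1}, and P(X) := A(X)·M(X)·A(X)ᵀ, which is the orthogonal projection matrix onto the column span of A(X). Then for all X, X' ∈ ℝ^{(d−r)×r}: P(X) − P(X') = (I_d − P(X))·E₂·(X − X')·E₁ᵀ·P(X') + P(X)·E₁·(X − X')ᵀ·E₂ᵀ·(I_d − P(X')). -/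
open scoped Matrix

noncomputable section

/-- The block-identity matrix `E₁ = (I_r; 0) ∈ ℝ^{d×r}`, where the `d`-dimensional
index set is presented as `Fin r ⊕ Fin s` with `s = d − r`. -/
def E1 (r s : ℕ) : Matrix (Fin r ⊕ Fin s) (Fin r) ℝ :=
  Matrix.of fun i j => Sum.casesOn i (fun a => if a = j then (1 : ℝ) else 0) (fun _ => 0)

/-- The block-identity matrix `E₂ = (0; I_{d−r}) ∈ ℝ^{d×(d−r)}`. -/
def E2 (r s : ℕ) : Matrix (Fin r ⊕ Fin s) (Fin s) ℝ :=
  Matrix.of fun i j => Sum.casesOn i (fun _ => (0 : ℝ)) (fun b => if b = j then 1 else 0)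

/-- `A(X) = (I_r; X) ∈ ℝ^{d×r}`. -/
def Amat (r s : ℕ) (X : Matrix (Fin s) (Fin r) ℝ) : Matrix (Fin r ⊕ Fin s) (Fin r) ℝ :=
  E1 r s + E2 r s * X

/-- `M(X) = (I_r + XᵀX)⁻¹`. -/
def Mmat (r s : ℕ) (X : Matrix (Fin s) (Fin r) ℝ) : Matrix (Fin r) (Fin r) ℝ :=
  (1 + Xᵀ * X)⁻¹

/-- `P(X) = A(X)·M(X)·A(X)ᵀ`, the orthogonal projection onto the column span of `A(X)`. -/
def Pproj (r s : ℕ) (X : Matrix (Fin s) (Fin r) ℝ) :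
    Matrix (Fin r ⊕ Fin s) (Fin r ⊕ Fin s) ℝ :=
  Amat r s X * Mmat r s X * (Amat r s X)ᵀ

/-!
Let `P`, `P'` be the orthogonal projections onto the column spans of `A`, `A'`. If `A` and `A'`
share a left inverse `F`, then `A' * F` fixes the range of `P'`, so `(1 - P) * A = 0` gives
`(1 - P) * P' = (1 - P) * (A' - A) * F * P'`. Exchanging the two matrices and taking adjoints
yields the matching formula for `P * (1 - P')`, and `P - P' = P * (1 - P') - (1 - P) * P'`.
Here `F = E₁ᵀ` and `A(X) - A(X') = E₂ * (X - X')`.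
-/

section ColumnProj

open Matrix

variable {m n R : Type*} [Fintype m] [Fintype n]

lemma one_sub_mul_eq_one_sub_mul_sub_mul_mul [DecidableEq m] [Ring R] {A A' : Matrix m n R}
    {F : Matrix n m R} {P P' : Matrix m m R} (hA : P * A = A) (hP' : A' * F * P' = P') :
    (1 - P) * P' = (1 - P) * (A' - A) * F * P' := by
  have compl_mul_A : (1 - P) * A = 0 := by rw [Matrix.sub_mul, Matrix.one_mul, hA, sub_self]
  calc (1 - P) * P'
    _ = (1 - P) * (A' * F * P') := by rw [hP']
    _ = (1 - P) * (A' - A) * F * P' := by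
      simp only [Matrix.mul_sub, compl_mul_A, sub_zero, Matrix.mul_assoc]

variable [DecidableEq n] [CommRing R] [StarRing R]

/-- The orthogonal projection `A (Aᴴ A)⁻¹ Aᴴ` onto the column span of `A`; the matrices `P(X)` are
those of `A(X)`. If `Aᴴ * A` is not invertible, the inverse is `0` and so is `columnProj A`. -/
def columnProj (A : Matrix m n R) : Matrix m m R :=
  A * (Aᴴ * A)⁻¹ * Aᴴ

lemma isHermitian_columnProj (A : Matrix m n R) : (columnProj A).IsHermitian :=
  isHermitian_mul_mul_conjTranspose A (isHermitian_conjTranspose_mul_self A).inv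

lemma columnProj_mul_self {A : Matrix m n R} (hA : IsUnit (Aᴴ * A)) : columnProj A * A = A := by
  rw [columnProj, Matrix.mul_assoc, Matrix.mul_assoc,
    nonsing_inv_mul _ ((isUnit_iff_isUnit_det _).mp hA), Matrix.mul_one]

lemma mul_mul_columnProj_of_mul_eq_one {A : Matrix m n R} {F : Matrix n m R} (hF : F * A = 1) :
    A * F * columnProj A = columnProj A := by
  simp only [columnProj, ← Matrix.mul_assoc]
  rw [Matrix.mul_assoc A F A, hF, Matrix.mul_one]

theorem nonperturbative_decomposition_of_projector_difference_general [DecidableEq m]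
    {A A' : Matrix m n R} {F : Matrix n m R} (hA : IsUnit (Aᴴ * A)) (hA' : IsUnit (A'ᴴ * A'))
    (hF : F * A = 1) (hF' : F * A' = 1) :
    columnProj A - columnProj A' =
      (1 - columnProj A) * (A - A') * F * columnProj A' +
        columnProj A * Fᴴ * (A - A')ᴴ * (1 - columnProj A') := by
  have compl_mul : (1 - columnProj A) * columnProj A' =
      (1 - columnProj A) * (A' - A) * F * columnProj A' :=
    one_sub_mul_eq_one_sub_mul_sub_mul_mul (columnProj_mul_self hA)
      (mul_mul_columnProj_of_mul_eq_one hF')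
  have mul_compl : columnProj A * (1 - columnProj A') =
      columnProj A * Fᴴ * (A - A')ᴴ * (1 - columnProj A') := by
    have swapped := congrArg conjTranspose (one_sub_mul_eq_one_sub_mul_sub_mul_mul
      (columnProj_mul_self hA') (mul_mul_columnProj_of_mul_eq_one hF))
    simpa [(isHermitian_columnProj _).eq, Matrix.mul_assoc] using swapped
  calc columnProj A - columnProj A'
    _ = -((1 - columnProj A) * columnProj A') + columnProj A * (1 - columnProj A') := by
      noncomm_ring
    _ = _ := by
      rw [compl_mul, mul_compl, ← neg_sub A A']
      simp only [Matrix.mul_neg, Matrix.neg_mul, neg_neg]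

lemma isUnit_conjTranspose_mul_self_of_mul_eq_one {K : Type*} [Field K] [PartialOrder K]
    [StarRing K] [StarOrderedRing K] {A : Matrix m n K} {F : Matrix n m K} (hF : F * A = 1) :
    IsUnit (Aᴴ * A) := by
  have mulVec_injective : Function.Injective A.mulVec :=
    Function.LeftInverse.injective (g := F.mulVec) fun v => by
      rw [mulVec_mulVec, hF, one_mulVec]
  exact (PosDef.conjTranspose_mul_self A mulVec_injective).isUnit

end ColumnProj

section BlockMatrices

open Matrix

variable {r s : ℕ}

lemma E1_eq_fromRows : E1 r s = fromRows 1 0 := by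
  ext (_ | _) _ <;> simp [E1, one_apply]

lemma E2_eq_fromRows : E2 r s = fromRows 0 1 := by
  ext (_ | _) _ <;> simp [E2, one_apply]

lemma Amat_eq_fromRows (X : Matrix (Fin s) (Fin r) ℝ) : Amat r s X = fromRows 1 X := by
  ext (_ | _) _ <;> simp [Amat, E1_eq_fromRows, E2_eq_fromRows, fromRows_mul]

lemma Amat_sub_Amat (X X' : Matrix (Fin s) (Fin r) ℝ) :
    Amat r s X - Amat r s X' = E2 r s * (X - X') := by
  rw [Amat, Amat, add_sub_add_left_eq_sub, Matrix.mul_sub]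

lemma E1_transpose_mul_Amat (X : Matrix (Fin s) (Fin r) ℝ) : (E1 r s)ᵀ * Amat r s X = 1 := by
  simp [E1_eq_fromRows, Amat_eq_fromRows, transpose_fromRows, fromCols_mul_fromRows]

lemma Pproj_eq_columnProj (X : Matrix (Fin s) (Fin r) ℝ) :
    Pproj r s X = columnProj (Amat r s X) := by
  have gram : (Amat r s X)ᵀ * Amat r s X = 1 + Xᵀ * X := by
    simp [Amat_eq_fromRows, transpose_fromRows, fromCols_mul_fromRows]
  rw [Pproj, Mmat, columnProj, conjTranspose_eq_transpose_of_trivial, gram]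

end BlockMatrices

/-- **Non-Perturbative Decomposition of the Projector Difference (Lemma).** -/
theorem nonperturbative_decomposition_of_projector_difference
    (r s : ℕ) (hr : 1 ≤ r) (hs : 1 ≤ s) :
    ∀ X X' : Matrix (Fin s) (Fin r) ℝ,
      Pproj r s X - Pproj r s X' =
        (1 - Pproj r s X) * E2 r s * (X - X') * (E1 r s)ᵀ * Pproj r s X' +
          Pproj r s X * E1 r s * (X - X')ᵀ * (E2 r s)ᵀ * (1 - Pproj r s X') := by
  intro X X'
  have hF (Y : Matrix (Fin s) (Fin r) ℝ) := E1_transpose_mul_Amat Y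
  have hA (Y : Matrix (Fin s) (Fin r) ℝ) := isUnit_conjTranspose_mul_self_of_mul_eq_one (hF Y)
  simpa [Pproj_eq_columnProj, Amat_sub_Amat, Matrix.mul_assoc] using
    nonperturbative_decomposition_of_projector_difference_general (hA X) (hA X') (hF X) (hF X')

end
end
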